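/- arXiv:1907.04663 — 2 statements merged into one kernel-verified Lean document; each statement's English description precedes it below -/
import Mathlib

section
/- Assume dom f ≠ ∅ and fix η ∈ ℝ. Then the function Q_{EP_η} : P_Z → ℝ, Q_{EP_η}(x) := μ_Z({ z ∈ ℝˢ : f(x,z) > η }), is lower semicontinuous on P_Z, and it is continuous at every x ∈ P_Z satisfying μ_Z({ z ∈ ℝˢ : f(x,z) = η }) = 0. Moreover, if X ⊆ P_Z is nonempty and compact, then Q_{EP_η} attains its minimum over X. -/
open MeasureTheory Matrix Set Topology Filter
open scoped ENNReal NNReal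

noncomputable section

/-- Feasible set of the lower level problem: `{ y | A y ≤ T x + z }`. -/
def LowerFeas {n m s : ℕ} (A : Matrix (Fin s) (Fin m) ℝ) (T : Matrix (Fin s) (Fin n) ℝ)
    (x : Fin n → ℝ) (z : Fin s → ℝ) : Set (Fin m → ℝ) :=
  {y | A.mulVec y ≤ T.mulVec x + z}

/-- Lower level optimal solution set `Ψ(x,z) = Argmin { dᵀy | A y ≤ T x + z }`. -/
def Psi {n m s : ℕ} (d : Fin m → ℝ) (A : Matrix (Fin s) (Fin m) ℝ)
    (T : Matrix (Fin s) (Fin n) ℝ) (x : Fin n → ℝ) (z : Fin s → ℝ) : Set (Fin m → ℝ) :=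
  {y | y ∈ LowerFeas A T x z ∧ ∀ y' ∈ LowerFeas A T x z, d ⬝ᵥ y ≤ d ⬝ᵥ y'}

/-- `f(x,z) = cᵀx + inf { qᵀ y | y ∈ Ψ(x,z) }` with values in `ℝ ∪ {±∞}`
(the infimum over the empty set being `+∞`). -/
def fE {n m s : ℕ} (c : Fin n → ℝ) (q d : Fin m → ℝ) (A : Matrix (Fin s) (Fin m) ℝ)
    (T : Matrix (Fin s) (Fin n) ℝ) (x : Fin n → ℝ) (z : Fin s → ℝ) : EReal :=
  ((c ⬝ᵥ x : ℝ) : EReal) + sInf ((fun y => ((q ⬝ᵥ y : ℝ) : EReal)) '' Psi d A T x z)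

/-- `P = { (x,z) | ∃ y, A y ≤ T x + z }`. -/
def Pfeas {n m s : ℕ} (A : Matrix (Fin s) (Fin m) ℝ) (T : Matrix (Fin s) (Fin n) ℝ) :
    Set ((Fin n → ℝ) × (Fin s → ℝ)) :=
  {p | (LowerFeas A T p.1 p.2).Nonempty}

/-- `dom f = { (x,z) | f(x,z) ∈ ℝ }`. -/
def domf {n m s : ℕ} (c : Fin n → ℝ) (q d : Fin m → ℝ) (A : Matrix (Fin s) (Fin m) ℝ)
    (T : Matrix (Fin s) (Fin n) ℝ) : Set ((Fin n → ℝ) × (Fin s → ℝ)) :=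
  {p | fE c q d A T p.1 p.2 ≠ ⊤ ∧ fE c q d A T p.1 p.2 ≠ ⊥}

/-- Topological support of a Borel measure. -/
def msupport {s : ℕ} (μ : Measure (Fin s → ℝ)) : Set (Fin s → ℝ) :=
  {z | ∀ U : Set (Fin s → ℝ), IsOpen U → z ∈ U → μ U ≠ 0}

/-- `P_Z = { x | (x,z) ∈ P for all z ∈ supp μ_Z }`. -/
def PZSet {n m s : ℕ} (A : Matrix (Fin s) (Fin m) ℝ) (T : Matrix (Fin s) (Fin n) ℝ)
    (μZ : Measure (Fin s → ℝ)) : Set (Fin n → ℝ) :=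
  {x | ∀ z ∈ msupport μZ, (x, z) ∈ Pfeas A T}

lemma hoffman_aux (m : ℕ) : ∀ (ι : Type) [Fintype ι] (a : ι → Fin m → ℝ), ∃ L : ℝ, 0 ≤ L ∧
    ∀ (b b' : ι → ℝ) (y : Fin m → ℝ), (∀ i, a i ⬝ᵥ y ≤ b i) → (∃ y', ∀ i, a i ⬝ᵥ y' ≤ b' i) →
    ∀ δ : ℝ, 0 ≤ δ → (∀ i, |b i - b' i| ≤ δ) →
    ∃ y', (∀ i, a i ⬝ᵥ y' ≤ b' i) ∧ ∀ j, |y j - y' j| ≤ L * δ := by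
  induction m with
  | zero =>
    intro ι _ a
    refine ⟨0, le_rfl, fun b b' y hy hy' δ hδ hb => ?_⟩
    obtain ⟨y', hy'⟩ := hy'
    exact ⟨y', hy', fun j => j.elim0⟩
  | succ m ih =>
    intro ι _ a
    classical
    let r : ι → Fin m → ℝ := fun i j => a i j.succ
    have hdot : ∀ i (y : Fin (m+1) → ℝ), a i ⬝ᵥ y = a i 0 * y 0 + r i ⬝ᵥ (fun j => y j.succ) := by
      intro i y
      simp [dotProduct, Fin.sum_univ_succ, r]
    let lam : ι × ι → ℝ := fun p => if a p.1 0 < 0 ∧ 0 < a p.2 0 then a p.2 0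
      else if a p.1 0 = 0 then 1 else 0
    let mu : ι × ι → ℝ := fun p => if a p.1 0 < 0 ∧ 0 < a p.2 0 then - a p.1 0 else 0
    have hlam0 : ∀ p, 0 ≤ lam p := by
      intro p; simp only [lam]; split_ifs with h1 h2
      · exact h1.2.le
      · norm_num
      · norm_num
    have hmu0 : ∀ p, 0 ≤ mu p := by
      intro p; simp only [mu]; split_ifs with h1
      · linarith [h1.1]
      · norm_num
    have hz : ∀ p, lam p * a p.1 0 + mu p * a p.2 0 = 0 := by
      intro p; simp only [lam, mu]; split_ifs with h1 h2
      · ring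
      · simp [h2]
      · simp
    let K : ℝ := 1 + ∑ i, |a i 0|
    have hK : ∀ i, |a i 0| ≤ K := by
      intro i
      have := Finset.single_le_sum (f := fun i => |a i 0|) (fun i _ => abs_nonneg _)
        (Finset.mem_univ i)
      simp only [K]; linarith
    have hK1 : 1 ≤ K := by
      have : 0 ≤ ∑ i, |a i 0| := Finset.sum_nonneg fun i _ => abs_nonneg _
      simp only [K]; linarith
    have hlamK : ∀ p, lam p ≤ K := by
      intro p; simp only [lam]; split_ifs with h1 h2
      · exact (le_abs_self _).trans (hK _)
      · exact hK1
      · linarith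
    have hmuK : ∀ p, mu p ≤ K := by
      intro p; simp only [mu]; split_ifs with h1
      · exact (neg_le_abs _).trans (hK _)
      · linarith
    obtain ⟨L', hL'0, hL'⟩ := ih (ι × ι) (fun p => lam p • r p.1 + mu p • r p.2)
    let R : ℝ := ∑ i, ∑ j, |r i j|
    have hR : ∀ i, ∑ j, |r i j| ≤ R := fun i =>
      Finset.single_le_sum (f := fun i => ∑ j, |r i j|)
        (fun i _ => Finset.sum_nonneg fun j _ => abs_nonneg _) (Finset.mem_univ i)
    have hR0 : 0 ≤ R := Finset.sum_nonneg fun i _ => Finset.sum_nonneg fun j _ => abs_nonneg _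
    let N : ℝ := ∑ i, |a i 0|⁻¹
    have hN : ∀ i, |a i 0|⁻¹ ≤ N := fun i =>
      Finset.single_le_sum (f := fun i => |a i 0|⁻¹) (fun i _ => by positivity) (Finset.mem_univ i)
    have hN0 : 0 ≤ N := Finset.sum_nonneg fun i _ => by positivity
    let W : ℝ := 1 + R * (L' * (2 * K))
    have hK0 : 0 ≤ K := by linarith
    have hW0 : 0 ≤ W := by positivity
    refine ⟨L' * (2 * K) + W * N, by positivity, fun b b' y hy hy' δ hδ hb => ?_⟩
    have hred : ∀ (b : ι → ℝ) (y : Fin (m+1) → ℝ), (∀ i, a i ⬝ᵥ y ≤ b i) →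
        ∀ p : ι × ι, (lam p • r p.1 + mu p • r p.2) ⬝ᵥ (fun j => y j.succ)
          ≤ lam p * b p.1 + mu p * b p.2 := by
      intro b y h p
      have h1 := mul_le_mul_of_nonneg_left (h p.1) (hlam0 p)
      have h2 := mul_le_mul_of_nonneg_left (h p.2) (hmu0 p)
      rw [hdot] at h1 h2
      rw [add_dotProduct, smul_dotProduct, smul_dotProduct, smul_eq_mul, smul_eq_mul]
      have h3 : (lam p * a p.1 0 + mu p * a p.2 0) * y 0 = 0 := by rw [hz]; ring
      linarith
    obtain ⟨y1, hy1⟩ := hy'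
    obtain ⟨w, hw, hwd⟩ := hL' (fun p => lam p * b p.1 + mu p * b p.2)
      (fun p => lam p * b' p.1 + mu p * b' p.2) (fun j => y j.succ) (hred b y hy)
      ⟨_, hred b' y1 hy1⟩ (2 * K * δ) (by positivity) (by
        intro p
        have e : lam p * b p.1 + mu p * b p.2 - (lam p * b' p.1 + mu p * b' p.2)
          = lam p * (b p.1 - b' p.1) + mu p * (b p.2 - b' p.2) := by ring
        rw [e]
        refine (abs_add_le _ _).trans ?_
        rw [abs_mul, abs_mul, abs_of_nonneg (hlam0 p), abs_of_nonneg (hmu0 p)]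
        have h1 := mul_le_mul (hlamK p) (hb p.1) (abs_nonneg _) hK0
        have h2 := mul_le_mul (hmuK p) (hb p.2) (abs_nonneg _) hK0
        linarith)
    let e : ι → ℝ := fun i => b' i - r i ⬝ᵥ w
    have he : ∀ i, a i 0 * y 0 ≤ e i + W * δ := by
      intro i
      have h1 := hy i
      rw [hdot] at h1
      have h2 := (abs_le.1 (hb i)).2
      have h3 : r i ⬝ᵥ w - r i ⬝ᵥ (fun j => y j.succ) ≤ R * (L' * (2 * K * δ)) := by
        rw [← dotProduct_sub]
        calc r i ⬝ᵥ (w - fun j => y j.succ) ≤ ∑ j, |r i j| * (L' * (2 * K * δ)) := by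
              refine Finset.sum_le_sum fun j _ => ?_
              refine (le_abs_self _).trans ?_
              rw [abs_mul]
              refine mul_le_mul_of_nonneg_left ?_ (abs_nonneg _)
              rw [Pi.sub_apply, abs_sub_comm]
              exact hwd j
          _ = (∑ j, |r i j|) * (L' * (2 * K * δ)) := by rw [Finset.sum_mul]
          _ ≤ _ := mul_le_mul_of_nonneg_right (hR i) (by positivity)
      simp only [e, W]
      linarith
    have hpair : ∀ i j, a i 0 < 0 → 0 < a j 0 → e i / a i 0 ≤ e j / a j 0 := by
      intro i j hi hj
      have h := hw (i, j)
      have hl : lam (i, j) = a j 0 := by simp [lam, hi, hj]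
      have hm : mu (i, j) = - a i 0 := by simp [mu, hi, hj]
      rw [add_dotProduct, smul_dotProduct, smul_dotProduct, smul_eq_mul, smul_eq_mul, hl, hm] at h
      simp only at h
      rw [le_div_iff₀ hj, div_mul_eq_mul_div, div_le_iff_of_neg hi]
      simp only [e]
      linarith
    let ρ : ℝ := W * N * δ
    have hρ : 0 ≤ ρ := by positivity
    have hWN : ∀ i, W * δ * |a i 0|⁻¹ ≤ ρ := by
      intro i
      have := mul_le_mul_of_nonneg_left (hN i) (mul_nonneg hW0 hδ)
      simp only [ρ]; linarith
    have hlow : ∀ i, a i 0 < 0 → e i / a i 0 ≤ y 0 + ρ := by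
      intro i hi
      have h1 := hWN i
      rw [abs_of_neg hi] at h1
      have h2 : (e i + W * δ) / a i 0 ≤ y 0 := by
        rw [div_le_iff_of_neg hi]; linarith [he i]
      have h3 : (e i + W * δ) / a i 0 = e i / a i 0 - W * δ * (- a i 0)⁻¹ := by
        field_simp
        ring
      linarith
    have hup : ∀ i, 0 < a i 0 → y 0 - ρ ≤ e i / a i 0 := by
      intro i hi
      have h1 := hWN i
      rw [abs_of_pos hi] at h1
      have h2 : y 0 ≤ (e i + W * δ) / a i 0 := by
        rw [le_div_iff₀ hi]; linarith [he i]
      have h3 : (e i + W * δ) / a i 0 = e i / a i 0 + W * δ * (a i 0)⁻¹ := by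
        field_simp
      linarith
    obtain ⟨t, ht1, ht2⟩ : (upperBounds (insert (y 0 - ρ) {v | ∃ i, a i 0 < 0 ∧ v = e i / a i 0}) ∩
        lowerBounds (insert (y 0 + ρ) {v | ∃ i, 0 < a i 0 ∧ v = e i / a i 0})).Nonempty := by
      refine exists_between_of_forall_le (Set.insert_nonempty _ _) (Set.insert_nonempty _ _) ?_
      rintro u (rfl | ⟨i, hi, rfl⟩) v (rfl | ⟨j, hj, rfl⟩)
      · linarith
      · exact hup j hj
      · exact hlow i hi
      · exact hpair i j hi hj
    refine ⟨Fin.cons t w, ?_, ?_⟩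
    · intro i
      rw [hdot]
      simp only [Fin.cons_zero, Fin.cons_succ]
      change a i 0 * t + r i ⬝ᵥ w ≤ b' i
      rcases lt_trichotomy (a i 0) 0 with hi | hi | hi
      · have h := ht1 (Set.mem_insert_of_mem _ ⟨i, hi, rfl⟩)
        rw [div_le_iff_of_neg hi] at h
        simp only [e] at h
        linarith
      · have h := hw (i, i)
        have hl : lam (i, i) = 1 := by simp [lam, hi]
        have hm : mu (i, i) = 0 := by simp [mu, hi]
        rw [add_dotProduct, smul_dotProduct, smul_dotProduct, smul_eq_mul, smul_eq_mul, hl, hm] at h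
        simp only at h
        rw [hi]
        linarith
      · have h := ht2 (Set.mem_insert_of_mem _ ⟨i, hi, rfl⟩)
        rw [le_div_iff₀ hi] at h
        simp only [e] at h
        linarith
    · intro j
      refine Fin.cases ?_ (fun j => ?_) j
      · simp only [Fin.cons_zero]
        have h1 := ht1 (Set.mem_insert _ _)
        have h2 := ht2 (Set.mem_insert _ _)
        have h3 : 0 ≤ L' * (2 * K) * δ := by positivity
        simp only [ρ] at h1 h2
        rw [abs_le]
        constructor <;> linarith
      · simp only [Fin.cons_succ]
        have h1 := hwd j
        have h3 : 0 ≤ W * N * δ := hρ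
        linarith

lemma lp_value {m : ℕ} (ι : Type) [Fintype ι] (a : ι → Fin m → ℝ) (d : Fin m → ℝ)
    (b0 : ι → ℝ) (h0 : ∃ y, ∀ i, a i ⬝ᵥ y ≤ b0 i) (B : ℝ)
    (hB : ∀ y, (∀ i, a i ⬝ᵥ y ≤ b0 i) → B ≤ d ⬝ᵥ y) :
    ∃ (φ : (ι → ℝ) → ℝ) (C : ℝ), 0 ≤ C ∧
      (∀ b, (∃ y, ∀ i, a i ⬝ᵥ y ≤ b i) →
        (∃ y, (∀ i, a i ⬝ᵥ y ≤ b i) ∧ d ⬝ᵥ y = φ b) ∧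
        ∀ y, (∀ i, a i ⬝ᵥ y ≤ b i) → φ b ≤ d ⬝ᵥ y) ∧
      ∀ b b', (∃ y, ∀ i, a i ⬝ᵥ y ≤ b i) → (∃ y, ∀ i, a i ⬝ᵥ y ≤ b' i) →
        |φ b - φ b'| ≤ C * dist b b' := by
  classical
  obtain ⟨L, hL0, hL⟩ := hoffman_aux m ι a
  let D : ℝ := ∑ j, |d j|
  have hD0 : 0 ≤ D := Finset.sum_nonneg fun j _ => abs_nonneg _
  have hDd : ∀ (y y' : Fin m → ℝ) (ε : ℝ), (∀ j, |y j - y' j| ≤ ε) → d ⬝ᵥ y' ≤ d ⬝ᵥ y + D * ε := by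
    intro y y' ε h
    have : d ⬝ᵥ y' - d ⬝ᵥ y ≤ D * ε := by
      rw [← dotProduct_sub, Finset.sum_mul]
      refine Finset.sum_le_sum fun j _ => ?_
      refine (le_abs_self _).trans ?_
      rw [abs_mul]
      refine mul_le_mul_of_nonneg_left ?_ (abs_nonneg _)
      rw [Pi.sub_apply, abs_sub_comm]
      exact h j
    linarith
  have hstep : ∀ (b b' : ι → ℝ) (y : Fin m → ℝ), (∀ i, a i ⬝ᵥ y ≤ b i) →
      (∃ y', ∀ i, a i ⬝ᵥ y' ≤ b' i) →
      ∃ y', (∀ i, a i ⬝ᵥ y' ≤ b' i) ∧ d ⬝ᵥ y' ≤ d ⬝ᵥ y + D * (L * dist b b') := by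
    intro b b' y hy hy'
    obtain ⟨y', h1, h2⟩ := hL b b' y hy hy' (dist b b') dist_nonneg
      (fun i => by rw [← Real.dist_eq]; exact dist_le_pi_dist b b' i)
    exact ⟨y', h1, hDd _ _ _ h2⟩
  have hatt : ∀ b : ι → ℝ, (∃ y, ∀ i, a i ⬝ᵥ y ≤ b i) → ∃ y, (∀ i, a i ⬝ᵥ y ≤ b i) ∧
      ∀ y', (∀ i, a i ⬝ᵥ y' ≤ b i) → d ⬝ᵥ y ≤ d ⬝ᵥ y' := by
    intro b hb
    obtain ⟨y1, hy1⟩ := hb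
    have hbd : ∀ y, (∀ i, a i ⬝ᵥ y ≤ b i) → B - D * (L * dist b b0) ≤ d ⬝ᵥ y := by
      intro y hy
      obtain ⟨y', h1, h2⟩ := hstep b b0 y hy h0
      linarith [hB y' h1]
    obtain ⟨L2, hL20, hL2⟩ := hoffman_aux m (Option ι) (fun o => o.elim d a)
    let B' : ℝ := B - D * (L * dist b b0)
    let R : ℝ := L2 * (d ⬝ᵥ y1 - B')
    have hR0 : 0 ≤ R := mul_nonneg hL20 (sub_nonneg.2 (hbd y1 hy1))
    have hcont : ∀ v : Fin m → ℝ, Continuous fun y : Fin m → ℝ => v ⬝ᵥ y := fun v =>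
      Continuous.dotProduct continuous_const continuous_id
    have hcl : IsClosed {y : Fin m → ℝ | ∀ i, a i ⬝ᵥ y ≤ b i} := by
      simp only [Set.ofPred_forall]
      exact isClosed_iInter fun i => isClosed_le (hcont _) continuous_const
    have hcomp : IsCompact (Metric.closedBall y1 R ∩ {y : Fin m → ℝ | ∀ i, a i ⬝ᵥ y ≤ b i}) :=
      (isCompact_closedBall y1 R).inter_right hcl
    obtain ⟨ys, hys, hmin⟩ := hcomp.exists_isMinOn ⟨y1, Metric.mem_closedBall_self hR0, hy1⟩
      (hcont d).continuousOn
    refine ⟨ys, hys.2, fun y hy => ?_⟩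
    rcases le_total (d ⬝ᵥ y1) (d ⬝ᵥ y) with h | h
    · exact (hmin ⟨Metric.mem_closedBall_self hR0, hy1⟩ : d ⬝ᵥ ys ≤ d ⬝ᵥ y1).trans h
    · obtain ⟨y', h1, h2⟩ := hL2 (fun o => o.elim (d ⬝ᵥ y1) b) (fun o => o.elim (d ⬝ᵥ y) b) y1
        (by rintro (_ | i); exacts [le_rfl, hy1 i])
        ⟨y, by rintro (_ | i); exacts [le_rfl, hy i]⟩ (d ⬝ᵥ y1 - d ⬝ᵥ y) (sub_nonneg.2 h)
        (by rintro (_ | i)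
            · simp [abs_of_nonneg (sub_nonneg.2 h)]
            · simpa using h)
      have h3 : d ⬝ᵥ y' ≤ d ⬝ᵥ y := h1 none
      refine le_trans (hmin ⟨?_, fun i => h1 (some i)⟩ : d ⬝ᵥ ys ≤ d ⬝ᵥ y') h3
      rw [Metric.mem_closedBall, dist_comm, dist_pi_le_iff hR0]
      intro j
      rw [Real.dist_eq]
      refine (h2 j).trans (mul_le_mul_of_nonneg_left ?_ hL20)
      have := hbd y hy
      simp only [B']; linarith
  choose! ys hys1 hys2 using hatt
  refine ⟨fun b => d ⬝ᵥ ys b, D * L, by positivity, fun b hb => ⟨⟨ys b, hys1 b hb, rfl⟩, hys2 b hb⟩,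
    fun b b' hb hb' => ?_⟩
  obtain ⟨y1, h1, h2⟩ := hstep b b' (ys b) (hys1 b hb) hb'
  obtain ⟨y2, h3, h4⟩ := hstep b' b (ys b') (hys1 b' hb') hb
  have h5 := hys2 b' hb' y1 h1
  have h6 := hys2 b hb y2 h3
  rw [dist_comm b' b] at h4
  rw [abs_le]
  constructor <;> linarith

lemma fE_real {n m s : ℕ} (c : Fin n → ℝ) (q d : Fin m → ℝ) (A : Matrix (Fin s) (Fin m) ℝ)
    (T : Matrix (Fin s) (Fin n) ℝ) (hdom : (domf c q d A T).Nonempty) :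
    ∃ h : (Fin n → ℝ) × (Fin s → ℝ) → ℝ, ContinuousOn h (Pfeas A T) ∧
      ∀ x z, (x, z) ∈ Pfeas A T → fE c q d A T x z = (h (x, z) : EReal) := by
  obtain ⟨⟨x0, z0⟩, h1, h2⟩ := hdom
  simp only [fE] at h1 h2
  have hne : (Psi d A T x0 z0).Nonempty := by
    by_contra hcon
    rw [Set.not_nonempty_iff_eq_empty] at hcon
    apply h1
    simp [hcon]
  obtain ⟨y0, hy0, hy0m⟩ := hne
  have hbot : ∃ B : ℝ, ∀ y ∈ Psi d A T x0 z0, B ≤ q ⬝ᵥ y := by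
    have h3 : sInf ((fun y => ((q ⬝ᵥ y : ℝ) : EReal)) '' Psi d A T x0 z0) ≠ ⊥ := by
      intro h; apply h2; rw [h]; simp
    obtain ⟨B, hB⟩ := EReal.lt_iff_exists_real_btwn.1 (bot_lt_iff_ne_bot.2 h3)
    refine ⟨B, fun y hy => ?_⟩
    have : (B : EReal) ≤ ((q ⬝ᵥ y : ℝ) : EReal) := hB.2.le.trans (sInf_le ⟨y, hy, rfl⟩)
    exact_mod_cast this
  obtain ⟨B, hB⟩ := hbot
  obtain ⟨φ, C, hC0, hφ, hφL⟩ := lp_value (Fin s) (fun i => A i) d (T.mulVec x0 + z0) ⟨y0, hy0⟩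
    (d ⬝ᵥ y0) hy0m
  have hφ0 : φ (T.mulVec x0 + z0) = d ⬝ᵥ y0 := by
    obtain ⟨⟨y, hy, hyφ⟩, hm⟩ := hφ _ ⟨y0, hy0⟩
    exact le_antisymm (hm y0 hy0) (hyφ ▸ hy0m y hy)
  let ext : (Fin s → ℝ) → Option (Fin s) → ℝ := fun b o => o.elim (φ b) b
  obtain ⟨ψ, C2, hC20, hψ, hψL⟩ := lp_value (Option (Fin s)) (fun o => o.elim d (fun i => A i)) q
    (ext (T.mulVec x0 + z0)) ⟨y0, by rintro (_ | i); exacts [hφ0.ge, hy0 i]⟩ B (by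
      intro y hy
      refine hB y ⟨fun i => hy (some i), fun y' hy' => ?_⟩
      have := hy none
      exact (this.trans hφ0.le).trans (hy0m y' hy'))
  have hfe : ∀ b, (∃ y, ∀ i, A i ⬝ᵥ y ≤ b i) →
      ∃ y, ∀ o : Option (Fin s), (o.elim d (fun i => A i) : Fin m → ℝ) ⬝ᵥ y ≤ ext b o := by
    intro b hb
    obtain ⟨⟨y, hy, hyφ⟩, hm⟩ := hφ b hb
    exact ⟨y, by rintro (_ | i); exacts [hyφ.le, hy i]⟩
  refine ⟨fun p => c ⬝ᵥ p.1 + ψ (ext (T.mulVec p.1 + p.2)), ?_, ?_⟩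
  · have hg : ContinuousOn (fun b => ψ (ext b)) {b | ∃ y, ∀ i, A i ⬝ᵥ y ≤ b i} := by
      have : LipschitzOnWith (Real.toNNReal (C2 * (1 + C))) (fun b => ψ (ext b))
          {b | ∃ y, ∀ i, A i ⬝ᵥ y ≤ b i} := by
        refine LipschitzOnWith.of_dist_le_mul fun b hb b' hb' => ?_
        rw [Real.coe_toNNReal _ (by positivity), Real.dist_eq, mul_assoc]
        refine (hψL _ _ (hfe b hb) (hfe b' hb')).trans (mul_le_mul_of_nonneg_left ?_ hC20)
        have hd : 0 ≤ dist b b' := dist_nonneg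
        rw [dist_pi_le_iff (by positivity)]
        rintro (_ | i)
        · have := hφL b b' hb hb'
          change dist (φ b) (φ b') ≤ _
          rw [Real.dist_eq]; linarith
        · have := dist_le_pi_dist b b' i
          change dist (b i) (b' i) ≤ _
          have : 0 ≤ C * dist b b' := by positivity
          linarith
      exact this.continuousOn
    refine ContinuousOn.add ?_ ?_
    · exact (Continuous.dotProduct continuous_const continuous_fst).continuousOn
    · refine hg.comp (f := fun p : (Fin n → ℝ) × (Fin s → ℝ) => T.mulVec p.1 + p.2) ?_ ?_
      · exact ((Continuous.matrix_mulVec continuous_const continuous_fst).add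
          continuous_snd).continuousOn
      · rintro p ⟨y, hy⟩
        exact ⟨y, hy⟩
  · rintro x z ⟨y1, hy1⟩
    have hb : ∃ y, ∀ i, A i ⬝ᵥ y ≤ (T.mulVec x + z) i := ⟨y1, hy1⟩
    obtain ⟨⟨yφ, hyφ, hyφe⟩, hm⟩ := hφ _ hb
    obtain ⟨⟨ys, hys, hyse⟩, hms⟩ := hψ _ (hfe _ hb)
    have hleast : IsLeast ((fun y => ((q ⬝ᵥ y : ℝ) : EReal)) '' Psi d A T x z)
        ((ψ (ext (T.mulVec x + z)) : ℝ) : EReal) := by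
      constructor
      · refine ⟨ys, ⟨fun i => hys (some i), fun y' hy' => ?_⟩, by simp only [hyse]⟩
        exact (hys none : d ⬝ᵥ ys ≤ φ _).trans (hm y' hy')
      · rintro _ ⟨y, hy, rfl⟩
        have : ψ (ext (T.mulVec x + z)) ≤ q ⬝ᵥ y := by
          refine hms y ?_
          rintro (_ | i)
          · exact (hy.2 yφ hyφ).trans hyφe.le
          · exact hy.1 i
        exact EReal.coe_le_coe_iff.2 this
    simp only [fE]
    rw [hleast.csInf_eq]
    push_cast
    rfl

lemma eventually_lt_measure {α β : Type*} [MeasurableSpace β] (μ : Measure β) (l : Filter α)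
    [l.IsCountablyGenerated] (P : α → β → Prop) (G : Set β) (hG : ∀ z ∈ G, ∀ᶠ x in l, P x z)
    (r : ℝ≥0∞) (hr : r < μ G) : ∀ᶠ x in l, r < μ {z | P x z} := by
  obtain ⟨U, hU⟩ := l.exists_antitone_basis
  let S : ℕ → Set β := fun k => {z | ∀ x ∈ U k, P x z}
  have hmono : Monotone S := fun i j hij z hz x hx => hz x (hU.antitone hij hx)
  have hsub : G ⊆ ⋃ k, S k := by
    intro z hz
    obtain ⟨k, -, hk⟩ := hU.toHasBasis.mem_iff.1 (hG z hz)
    exact Set.mem_iUnion.2 ⟨k, fun x hx => hk hx⟩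
  have h1 : r < ⨆ k, μ (S k) := by
    rw [← hmono.measure_iUnion]
    exact hr.trans_le (measure_mono hsub)
  obtain ⟨k, hk⟩ := lt_iSup_iff.1 h1
  filter_upwards [hU.toHasBasis.mem_of_mem (i := k) trivial] with x hx
  exact hk.trans_le (measure_mono fun z hz => hz x hx)

lemma isClosed_msupport {s : ℕ} (μ : Measure (Fin s → ℝ)) : IsClosed (msupport μ) := by
  rw [← isOpen_compl_iff, isOpen_iff_forall_mem_open]
  intro z hz
  simp only [msupport, Set.mem_compl_iff, Set.mem_ofPred_eq, not_forall, not_not] at hz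
  obtain ⟨U, hU, hzU, h0⟩ := hz
  exact ⟨U, fun w hw hws => hws U hU hw h0, hU, hzU⟩

lemma measure_compl_msupport {s : ℕ} (μ : Measure (Fin s → ℝ)) : μ (msupport μ)ᶜ = 0 := by
  refine measure_null_of_locally_null _ fun z hz => ?_
  simp only [msupport, Set.mem_compl_iff, Set.mem_ofPred_eq, not_forall, not_not] at hz
  obtain ⟨U, hU, hzU, h0⟩ := hz
  exact ⟨U, mem_nhdsWithin_of_mem_nhds (hU.mem_nhds hzU), h0⟩

theorem excessProbability_lsc_continuous_and_attained {n m s : ℕ}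
    (c : Fin n → ℝ) (q d : Fin m → ℝ)
    (A : Matrix (Fin s) (Fin m) ℝ) (T : Matrix (Fin s) (Fin n) ℝ)
    (μZ : Measure (Fin s → ℝ)) [IsProbabilityMeasure μZ]
    (hdom : (domf c q d A T).Nonempty) (η : ℝ)
    (Q : (Fin n → ℝ) → ℝ)
    (hQ : ∀ x, Q x = (μZ {z | (η : EReal) < fE c q d A T x z}).toReal) :
    LowerSemicontinuousOn Q (PZSet A T μZ) ∧
    (∀ x ∈ PZSet A T μZ, μZ {z | fE c q d A T x z = (η : EReal)} = 0 →
      ContinuousWithinAt Q (PZSet A T μZ) x) ∧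
    (∀ X : Set (Fin n → ℝ), X ⊆ PZSet A T μZ → X.Nonempty → IsCompact X →
      ∃ xstar ∈ X, ∀ x ∈ X, Q xstar ≤ Q x) := by
  obtain ⟨h, hcont, hfe⟩ := fE_real c q d A T hdom
  set S := msupport μZ with hS
  have hSc : IsClosed S := isClosed_msupport μZ
  have hS0 : μZ Sᶜ = 0 := measure_compl_msupport μZ
  have hmem : ∀ x ∈ PZSet A T μZ, ∀ z ∈ S, (x, z) ∈ Pfeas A T := fun x hx z hz => hx z hz
  have hinter : ∀ G : Set (Fin s → ℝ), μZ (G ∩ S) = μZ G := fun G =>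
    measure_inter_conull' (measure_mono_null (fun z hz => hz.2) hS0)
  have hsec : ∀ x ∈ PZSet A T μZ, ∀ z ∈ S,
      Tendsto (fun x' => h (x', z)) (𝓝[PZSet A T μZ] x) (𝓝 (h (x, z))) := by
    intro x hx z hz
    have h1 : ContinuousWithinAt (fun x' => h (x', z)) (PZSet A T μZ) x :=
      ContinuousWithinAt.comp (t := Pfeas A T) (hcont (x, z) (hmem x hx z hz))
        (by fun_prop : Continuous fun x' : Fin n → ℝ => (x', z)).continuousWithinAt
        (fun x' hx' => hmem x' hx' z hz)
    exact h1
  have hgt : ∀ x ∈ PZSet A T μZ, ∀ r < μZ {z | (η : EReal) < fE c q d A T x z},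
      ∀ᶠ x' in 𝓝[PZSet A T μZ] x, r < μZ {z | (η : EReal) < fE c q d A T x' z} := by
    intro x hx r hr
    rw [← hinter] at hr
    refine eventually_lt_measure μZ _ _ _ ?_ r hr
    rintro z ⟨hz, hzS⟩
    rw [Set.mem_ofPred_eq, hfe x z (hmem x hx z hzS), EReal.coe_lt_coe_iff] at hz
    filter_upwards [(hsec x hx z hzS).eventually (lt_mem_nhds hz), self_mem_nhdsWithin]
      with x' h1 h2
    rw [hfe x' z (hmem x' h2 z hzS), EReal.coe_lt_coe_iff]
    exact h1
  have hlt : ∀ x ∈ PZSet A T μZ, ∀ r < μZ {z | fE c q d A T x z < (η : EReal)},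
      ∀ᶠ x' in 𝓝[PZSet A T μZ] x, r < μZ {z | fE c q d A T x' z < (η : EReal)} := by
    intro x hx r hr
    rw [← hinter] at hr
    refine eventually_lt_measure μZ _ _ _ ?_ r hr
    rintro z ⟨hz, hzS⟩
    rw [Set.mem_ofPred_eq, hfe x z (hmem x hx z hzS), EReal.coe_lt_coe_iff] at hz
    filter_upwards [(hsec x hx z hzS).eventually (gt_mem_nhds hz), self_mem_nhdsWithin]
      with x' h1 h2
    rw [hfe x' z (hmem x' h2 z hzS), EReal.coe_lt_coe_iff]
    exact h1
  have hmeas : ∀ x ∈ PZSet A T μZ,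
      MeasurableSet ({z | (η : EReal) < fE c q d A T x z} ∩ S) := by
    intro x hx
    have h1 : ContinuousOn (fun z => h (x, z)) S :=
      hcont.comp (by fun_prop : Continuous fun z : Fin s → ℝ => (x, z)).continuousOn
        (fun z hz => hmem x hx z hz)
    obtain ⟨u, hu, hue⟩ := continuousOn_iff'.1 h1 (Set.Ioi η) isOpen_Ioi
    have : {z | (η : EReal) < fE c q d A T x z} ∩ S = u ∩ S := by
      rw [← hue]
      ext z
      simp only [Set.mem_inter_iff, Set.mem_ofPred_eq, Set.mem_preimage, Set.mem_Ioi]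
      refine and_congr_left fun hz => ?_
      rw [hfe x z (hmem x hx z hz), EReal.coe_lt_coe_iff]
    rw [this]
    exact hu.measurableSet.inter hSc.measurableSet
  have hsum : ∀ x ∈ PZSet A T μZ, (μZ {z | (η : EReal) < fE c q d A T x z}).toReal
      + (μZ {z | fE c q d A T x z < (η : EReal)}).toReal ≤ 1 := by
    intro x hx
    rw [← hinter {z | (η : EReal) < fE c q d A T x z},
      ← ENNReal.toReal_add (measure_ne_top _ _) (measure_ne_top _ _), ← measure_union' _ (hmeas x hx)]
    · exact ENNReal.toReal_le_of_le_ofReal zero_le_one (by simpa using prob_le_one)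
    · rw [Set.disjoint_left]
      rintro z ⟨hz, -⟩ hz'
      rw [Set.mem_ofPred_eq] at hz hz'
      exact lt_asymm hz hz'
  have hlsc : LowerSemicontinuousOn Q (PZSet A T μZ) := by
    intro x hx r hr
    rcases lt_or_ge r 0 with h0 | h0
    · exact Eventually.of_forall fun x' => by
        change r < Q x'
        rw [hQ]; exact h0.trans_le ENNReal.toReal_nonneg
    rw [hQ] at hr
    filter_upwards [hgt x hx (ENNReal.ofReal r)
      ((ENNReal.ofReal_lt_iff_lt_toReal h0 (measure_ne_top _ _)).2 hr)] with x' hx'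
    change r < Q x'
    rw [hQ]
    exact (ENNReal.ofReal_lt_iff_lt_toReal h0 (measure_ne_top _ _)).1 hx'
  refine ⟨hlsc, ?_, ?_⟩
  · intro x hx hx0
    refine tendsto_order.2 ⟨fun r hr => hlsc x hx r hr, fun r hr => ?_⟩
    have htot : 1 ≤ (μZ {z | (η : EReal) < fE c q d A T x z}).toReal
        + (μZ {z | fE c q d A T x z < (η : EReal)}).toReal := by
      have h1 : (1 : ℝ≥0∞) ≤ μZ {z | (η : EReal) < fE c q d A T x z}
          + μZ {z | fE c q d A T x z < (η : EReal)} := by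
        calc (1 : ℝ≥0∞) = μZ (({z | (η : EReal) < fE c q d A T x z}
              ∪ {z | fE c q d A T x z < (η : EReal)}) ∪ {z | fE c q d A T x z = (η : EReal)}) := by
              rw [← measure_univ (μ := μZ)]
              congr 1
              symm
              rw [Set.eq_univ_iff_forall]
              intro z
              rcases lt_trichotomy (fE c q d A T x z) (η : EReal) with h | h | h
              · exact Or.inl (Or.inr h)
              · exact Or.inr h
              · exact Or.inl (Or.inl h)
          _ ≤ _ := (measure_union_le _ _).trans (by
              rw [hx0, add_zero]; exact measure_union_le _ _)
      rw [← ENNReal.toReal_add (measure_ne_top _ _) (measure_ne_top _ _)]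
      have := ENNReal.toReal_mono (by finiteness) h1
      simpa using this
    rw [hQ] at hr
    rcases lt_or_ge (1 - r) 0 with h0 | h0
    · filter_upwards [self_mem_nhdsWithin] with x' hx'
      have h1 := hsum x' hx'
      have h2 : 0 ≤ (μZ {z | fE c q d A T x' z < (η : EReal)}).toReal := ENNReal.toReal_nonneg
      rw [hQ]; linarith
    · have h1 : 1 - r < (μZ {z | fE c q d A T x z < (η : EReal)}).toReal := by linarith
      filter_upwards [hlt x hx (ENNReal.ofReal (1 - r))
        ((ENNReal.ofReal_lt_iff_lt_toReal h0 (measure_ne_top _ _)).2 h1), self_mem_nhdsWithin]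
        with x' hx' hx'P
      have h2 := (ENNReal.ofReal_lt_iff_lt_toReal h0 (measure_ne_top _ _)).1 hx'
      have h3 := hsum x' hx'P
      rw [hQ]; linarith
  · intro X hX hne hXc
    obtain ⟨xs, hxs, hmin⟩ := (hlsc.mono hX).exists_isMinOn hne hXc
    exact ⟨xs, hxs, fun x hx => hmin hx⟩
end
end

section
/- Assume dom f ≠ ∅, that μ_Z ∈ 𝓜¹_s is absolutely continuous with respect to the Lebesgue measure on ℝˢ, and fix ρ ∈ [0,1). Then the mean upper semideviation functional Q_{SD¹_ρ}(x) := Q_𝔼(x) + ρ·∫_{ℝˢ} max{ f(x,z) − Q_𝔼(x), 0 } μ_Z(dz), where Q_𝔼(x) := ∫_{ℝˢ} f(x,z) μ_Z(dz), is continuously differentiable at every x₀ ∈ int P_Z satisfying Q_𝔼(x₀) ≠ 0. -/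
open MeasureTheory Matrix Set Topology Filter
open scoped ENNReal NNReal

noncomputable section

section LP
variable {n m s : ℕ}

/-- lexicographic nonnegativity of `(d v, q v)` -/
def LexNN (d q : Fin m → ℝ) (v : Fin m → ℝ) : Prop :=
  0 < d ⬝ᵥ v ∨ (d ⬝ᵥ v = 0 ∧ 0 ≤ q ⬝ᵥ v)

lemma LexNN.add {d q u v : Fin m → ℝ} (hu : LexNN d q u) (hv : LexNN d q v) :
    LexNN d q (u + v) := by
  unfold LexNN at *
  rw [dotProduct_add, dotProduct_add]
  rcases hu with hu | hu <;> rcases hv with hv | hv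
  · left; linarith
  · left; linarith
  · left; linarith
  · right; constructor <;> linarith

lemma LexNN.smul_iff {d q v : Fin m → ℝ} {t : ℝ} (ht : 0 < t) :
    LexNN d q (t • v) ↔ LexNN d q v := by
  unfold LexNN
  simp only [dotProduct_smul, smul_eq_mul, mul_pos_iff_of_pos_left ht, mul_eq_zero, ht.ne',
    false_or, mul_nonneg_iff_of_pos_left ht]

lemma LexNN.total (d q v : Fin m → ℝ) : LexNN d q v ∨ LexNN d q (-v) := by
  unfold LexNN
  simp only [dotProduct_neg]
  rcases lt_trichotomy (d ⬝ᵥ v) 0 with h | h | h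
  · right; left; linarith
  · rcases le_total 0 (q ⬝ᵥ v) with h' | h'
    · left; right; exact ⟨h, h'⟩
    · right; right; constructor <;> linarith
  · left; left; exact h

lemma LexNN.antisymm {d q v : Fin m → ℝ} (h : LexNN d q v) (h' : LexNN d q (-v)) :
    q ⬝ᵥ v = 0 := by
  unfold LexNN at *
  simp only [dotProduct_neg] at h'
  rcases h with h | h <;> rcases h' with h' | h'
  · linarith
  · linarith [h'.1]
  · linarith [h.1]
  · linarith [h.2, h'.2]

lemma exists_pinv (A : Matrix (Fin s) (Fin m) ℝ) (B : Finset (Fin s)) :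
    ∃ M : (Fin s → ℝ) →ₗ[ℝ] (Fin m → ℝ), ∀ (w : Fin s → ℝ) (y : Fin m → ℝ),
      (∀ i ∈ B, (A.mulVec y) i = w i) → ∀ i ∈ B, (A.mulVec (M w)) i = w i := by
  let R : (Fin s → ℝ) →ₗ[ℝ] (B → ℝ) := LinearMap.funLeft ℝ ℝ (fun i : B => (i : Fin s))
  let φ : (Fin m → ℝ) →ₗ[ℝ] (B → ℝ) := R ∘ₗ A.mulVecLin
  obtain ⟨r, hr⟩ := φ.rangeRestrict.exists_rightInverse_of_surjective
    (LinearMap.range_rangeRestrict φ)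
  obtain ⟨ψ, hψ⟩ := LinearMap.exists_extend r
  refine ⟨ψ ∘ₗ R, fun w y h i hi => ?_⟩
  have h1 : R w = φ y := by
    ext j
    exact (h j j.2).symm
  have h2 : ψ (φ y) = r (φ.rangeRestrict y) := by
    rw [← hψ]; rfl
  have h3 : φ (r (φ.rangeRestrict y)) = φ y := by
    have := congrArg (fun f => (f (φ.rangeRestrict y)).1) hr
    simpa using this
  have h4 : φ (ψ (R w)) = R w := by rw [h1, h2, h3]
  exact congrFun h4 ⟨i, hi⟩

open Classical in
/-- active set -/
def actSet (A : Matrix (Fin s) (Fin m) ℝ) (w : Fin s → ℝ) (y : Fin m → ℝ) : Finset (Fin s) :=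
  Finset.univ.filter (fun i => (A.mulVec y) i = w i)

lemma mem_actSet {A : Matrix (Fin s) (Fin m) ℝ} {w : Fin s → ℝ} {y : Fin m → ℝ} {i : Fin s} :
    i ∈ actSet A w y ↔ (A.mulVec y) i = w i := by
  simp [actSet]

lemma block (A : Matrix (Fin s) (Fin m) ℝ) (w : Fin s → ℝ) (y v : Fin m → ℝ)
    (hy : A.mulVec y ≤ w) (hv : ∀ i ∈ actSet A w y, (A.mulVec v) i = 0)
    (hj : ∃ j, 0 < (A.mulVec v) j) :
    ∃ t : ℝ, 0 < t ∧ A.mulVec (y + t • v) ≤ w ∧ actSet A w y ⊂ actSet A w (y + t • v) := by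
  classical
  obtain ⟨j0, hj0⟩ := hj
  obtain ⟨j, hjm, hmin⟩ := Finset.exists_min_image
    (Finset.univ.filter (fun j => 0 < (A.mulVec v) j))
    (fun j => (w j - (A.mulVec y) j) / (A.mulVec v) j) ⟨j0, by simp [hj0]⟩
  simp only [Finset.mem_filter, Finset.mem_univ, true_and] at hjm hmin
  have hjn : j ∉ actSet A w y := fun h => by
    have := hv j h; linarith
  have hlt : (A.mulVec y) j < w j := lt_of_le_of_ne (hy j) (fun h => hjn (mem_actSet.2 h))
  have hexp : ∀ (t : ℝ) i, (A.mulVec (y + t • v)) i = (A.mulVec y) i + t * (A.mulVec v) i := by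
    intro t i
    rw [mulVec_add, mulVec_smul]; simp
  have htpos : 0 < (w j - (A.mulVec y) j) / (A.mulVec v) j := div_pos (by linarith) hjm
  refine ⟨(w j - (A.mulVec y) j) / (A.mulVec v) j, htpos, ?_, ?_⟩
  · intro i
    rw [hexp]
    by_cases hi : 0 < (A.mulVec v) i
    · have := (le_div_iff₀ hi).1 (hmin i hi)
      linarith
    · have h1 := mul_nonpos_of_nonneg_of_nonpos htpos.le (not_lt.1 hi)
      have := hy i
      linarith
  · rw [Finset.ssubset_iff_of_subset]
    · refine ⟨j, ?_, hjn⟩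
      rw [mem_actSet, hexp, div_mul_cancel₀ _ hjm.ne']; ring
    · intro i hi
      rw [mem_actSet, hexp, hv i hi, mem_actSet.1 hi]; ring

lemma descend (d q : Fin m → ℝ) (A : Matrix (Fin s) (Fin m) ℝ)
    (M : Finset (Fin s) → ((Fin s → ℝ) →ₗ[ℝ] (Fin m → ℝ)))
    (hM : ∀ B, ∀ (w : Fin s → ℝ) (y : Fin m → ℝ),
      (∀ i ∈ B, (A.mulVec y) i = w i) → ∀ i ∈ B, (A.mulVec (M B w)) i = w i)
    (hR : ∀ v, A.mulVec v ≤ 0 → LexNN d q v) (w : Fin s → ℝ) (k : ℕ) :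
    ∀ y : Fin m → ℝ, A.mulVec y ≤ w → s - (actSet A w y).card = k →
      ∃ B, A.mulVec (M B w) ≤ w ∧ LexNN d q (y - M B w) := by
  induction k using Nat.strong_induction_on with
  | _ k ih =>
  intro y hy hk
  have step : ∀ v : Fin m → ℝ, (∀ i ∈ actSet A w y, (A.mulVec v) i = 0) →
      (∃ j, 0 < (A.mulVec v) j) → LexNN d q (-v) →
      ∃ B, A.mulVec (M B w) ≤ w ∧ LexNN d q (y - M B w) := by
    intro v hv hj hl
    obtain ⟨t, ht, hfeas, hss⟩ := block A w y v hy hv hj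
    have hc := Finset.card_lt_card hss
    have hc2 : (actSet A w (y + t • v)).card ≤ s := by
      simpa using Finset.card_le_univ (actSet A w (y + t • v))
    obtain ⟨B, hB, hB2⟩ := ih _ (by omega) (y + t • v) hfeas rfl
    refine ⟨B, hB, ?_⟩
    have h1 : LexNN d q (t • (-v)) := (LexNN.smul_iff ht).2 hl
    have := h1.add hB2
    convert this using 1
    simp only [smul_neg]; abel
  set B := actSet A w y with hB
  set v := M B w - y with hv
  have hv0 : ∀ i ∈ B, (A.mulVec v) i = 0 := by
    intro i hi
    have h1 := hM B w y (fun i hi => mem_actSet.1 hi) i hi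
    have h2 := mem_actSet.1 hi
    rw [hv, mulVec_sub, Pi.sub_apply, h1, h2, sub_self]
  have case1 : LexNN d q (-v) → ∃ B, A.mulVec (M B w) ≤ w ∧ LexNN d q (y - M B w) := by
    intro hl
    by_cases hf : A.mulVec (M B w) ≤ w
    · exact ⟨B, hf, by simpa [hv] using hl⟩
    · rw [Pi.le_def] at hf
      push Not at hf
      obtain ⟨j, hj⟩ := hf
      refine step v hv0 ⟨j, ?_⟩ hl
      have := hy j
      rw [hv, mulVec_sub, Pi.sub_apply]; linarith
  rcases LexNN.total d q v with hl | hl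
  · by_cases hj : ∃ j, 0 < (A.mulVec (-v)) j
    · refine step (-v) (fun i hi => ?_) hj (by simpa using hl)
      rw [mulVec_neg, Pi.neg_apply, hv0 i hi, neg_zero]
    · push Not at hj
      exact case1 (hR _ hj)
  · exact case1 hl

/-- A set of constraints is good if directions along it are lex nonneg. -/
def GoodSet (d q : Fin m → ℝ) (A : Matrix (Fin s) (Fin m) ℝ) (I : Finset (Fin s)) : Prop :=
  ∀ v, (∀ i ∈ I, (A.mulVec v) i ≤ 0) → LexNN d q v

/-- pieces -/
def piece (d q : Fin m → ℝ) (A : Matrix (Fin s) (Fin m) ℝ)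
    (M : Finset (Fin s) → ((Fin s → ℝ) →ₗ[ℝ] (Fin m → ℝ)))
    (p : Finset (Fin s) × Finset (Fin s)) : Set (Fin s → ℝ) :=
  {w | GoodSet d q A p.2 ∧ A.mulVec (M p.1 w) ≤ w ∧ ∀ i ∈ p.2, (A.mulVec (M p.1 w)) i = w i}

lemma lexNN_sub_iff (d q y y' : Fin m → ℝ) :
    LexNN d q (y' - y) ↔ toLex (d ⬝ᵥ y, q ⬝ᵥ y) ≤ toLex (d ⬝ᵥ y', q ⬝ᵥ y') := by
  rw [Prod.Lex.le_iff]
  simp only [LexNN, dotProduct_sub, sub_pos, sub_nonneg, ofLex_toLex, sub_eq_zero]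
  constructor <;> (rintro (h | h); exact Or.inl h; exact Or.inr ⟨h.1.symm, h.2⟩)

lemma cover (d q : Fin m → ℝ) (A : Matrix (Fin s) (Fin m) ℝ)
    (M : Finset (Fin s) → ((Fin s → ℝ) →ₗ[ℝ] (Fin m → ℝ)))
    (hM : ∀ B, ∀ (w : Fin s → ℝ) (y : Fin m → ℝ),
      (∀ i ∈ B, (A.mulVec y) i = w i) → ∀ i ∈ B, (A.mulVec (M B w)) i = w i)
    (hR : ∀ v, A.mulVec v ≤ 0 → LexNN d q v) (w : Fin s → ℝ)
    (hw : ∃ y, A.mulVec y ≤ w) : ∃ p, w ∈ piece d q A M p := by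
  classical
  obtain ⟨y0, hy0⟩ := hw
  obtain ⟨B0, hB0, -⟩ := descend d q A M hM hR w _ y0 hy0 rfl
  obtain ⟨B, hBm, hmin⟩ := Finset.exists_min_image
    (Finset.univ.filter (fun B => A.mulVec (M B w) ≤ w))
    (fun B => toLex (d ⬝ᵥ M B w, q ⬝ᵥ M B w)) ⟨B0, by simp [hB0]⟩
  simp only [Finset.mem_filter, Finset.mem_univ, true_and, ← lexNN_sub_iff] at hBm hmin
  refine ⟨(B, actSet A w (M B w)), ?_, hBm, fun i hi => mem_actSet.1 hi⟩
  intro v hv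
  have hopt : ∀ y, A.mulVec y ≤ w → LexNN d q (y - M B w) := by
    intro y hy
    obtain ⟨B', hB', hl⟩ := descend d q A M hM hR w _ y hy rfl
    have := hl.add (hmin B' hB')
    simpa using this
  have hev : ∀ᶠ t : ℝ in 𝓝[>] 0, ∀ i, (A.mulVec (M B w)) i + t * (A.mulVec v) i ≤ w i := by
    rw [eventually_all]
    intro i
    by_cases hi : i ∈ actSet A w (M B w)
    · filter_upwards [self_mem_nhdsWithin] with t ht
      have h1 := mul_nonpos_of_nonneg_of_nonpos (le_of_lt ht) (hv i hi)
      have := hBm i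
      linarith
    · have hlt : (A.mulVec (M B w)) i < w i :=
        lt_of_le_of_ne (hBm i) (fun h => hi (mem_actSet.2 h))
      have hc : ContinuousAt (fun t : ℝ => (A.mulVec (M B w)) i + t * (A.mulVec v) i) 0 := by
        fun_prop
      have := hc.eventually_lt (continuousAt_const (y := w i)) (by simpa using hlt)
      filter_upwards [nhdsWithin_le_nhds this] with t ht using ht.le
  obtain ⟨t, ht, ht0⟩ := (hev.and self_mem_nhdsWithin).exists
  have h1 : A.mulVec (M B w + t • v) ≤ w := by
    intro i
    rw [mulVec_add, mulVec_smul]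
    exact ht i
  have h2 := hopt _ h1
  rw [add_sub_cancel_left] at h2
  exact (LexNN.smul_iff ht0).1 h2

lemma piece_value (c : Fin n → ℝ) (d q : Fin m → ℝ) (A : Matrix (Fin s) (Fin m) ℝ)
    (T : Matrix (Fin s) (Fin n) ℝ)
    (M : Finset (Fin s) → ((Fin s → ℝ) →ₗ[ℝ] (Fin m → ℝ)))
    (p : Finset (Fin s) × Finset (Fin s)) (x : Fin n → ℝ) (z : Fin s → ℝ)
    (h : T.mulVec x + z ∈ piece d q A M p) :
    (fE c q d A T x z).toReal = c ⬝ᵥ x + q ⬝ᵥ (M p.1 (T.mulVec x + z)) := by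
  obtain ⟨hg, hf, ha⟩ := h
  set w := T.mulVec x + z with hw
  set y0 := M p.1 w with hy0
  have hopt : ∀ y, A.mulVec y ≤ w → LexNN d q (y - y0) := by
    intro y hy
    apply hg
    intro i hi
    rw [mulVec_sub, Pi.sub_apply, ha i hi]
    linarith [hy i]
  have hmem : y0 ∈ Psi d A T x z := by
    refine ⟨hf, fun y hy => ?_⟩
    have := hopt y hy
    unfold LexNN at this
    rw [dotProduct_sub] at this
    rcases this with h | h
    · linarith
    · linarith [h.1]
  have : sInf ((fun y => ((q ⬝ᵥ y : ℝ) : EReal)) '' Psi d A T x z) = ((q ⬝ᵥ y0 : ℝ) : EReal) := by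
    apply le_antisymm
    · exact sInf_le ⟨y0, hmem, rfl⟩
    · apply le_sInf
      rintro _ ⟨y, hy, rfl⟩
      have h1 := hopt y hy.1
      have h2 := hy.2 y0 hf
      unfold LexNN at h1
      rw [dotProduct_sub, dotProduct_sub] at h1
      simp only [EReal.coe_le_coe_iff]
      rcases h1 with h | h
      · linarith
      · linarith [h.2]
  rw [fE, this, ← EReal.coe_add, EReal.toReal_coe]

lemma recession (c : Fin n → ℝ) (d q : Fin m → ℝ) (A : Matrix (Fin s) (Fin m) ℝ)
    (T : Matrix (Fin s) (Fin n) ℝ) (hdom : (domf c q d A T).Nonempty) :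
    ∀ v, A.mulVec v ≤ 0 → LexNN d q v := by
  obtain ⟨⟨x, z⟩, h1, h2⟩ := hdom
  simp only at h1 h2
  intro v hv
  have hne : (Psi d A T x z).Nonempty := by
    by_contra hne
    rw [Set.not_nonempty_iff_eq_empty] at hne
    apply h1
    simp [fE, hne]
  obtain ⟨y, hy, hyo⟩ := hne
  have hfe : ∀ t : ℝ, 0 ≤ t → y + t • v ∈ LowerFeas A T x z := by
    intro t ht i
    rw [mulVec_add, mulVec_smul]
    have h3 := hy i
    have h4 := mul_nonpos_of_nonneg_of_nonpos ht (hv i)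
    simp only [Pi.add_apply, Pi.smul_apply, smul_eq_mul] at h3 h4 ⊢
    linarith
  have hd : 0 ≤ d ⬝ᵥ v := by
    have := hyo _ (hfe 1 zero_le_one)
    rw [one_smul, dotProduct_add] at this
    linarith
  rcases hd.lt_or_eq with hd | hd
  · exact Or.inl hd
  refine Or.inr ⟨hd.symm, ?_⟩
  by_contra hq
  push Not at hq
  apply h2
  have : sInf ((fun y => ((q ⬝ᵥ y : ℝ) : EReal)) '' Psi d A T x z) = ⊥ := by
    rw [EReal.eq_bot_iff_forall_lt]
    intro r
    set t := max 0 ((r - 1 - q ⬝ᵥ y) / (q ⬝ᵥ v)) with ht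
    have h3 : (r - 1 - q ⬝ᵥ y) / (q ⬝ᵥ v) ≤ t := le_max_right _ _
    rw [div_le_iff_of_neg hq] at h3
    have hm : y + t • v ∈ Psi d A T x z := by
      refine ⟨hfe t (le_max_left _ _), fun y' hy' => ?_⟩
      rw [dotProduct_add, dotProduct_smul, ← hd]
      simpa using hyo y' hy'
    refine lt_of_le_of_lt (sInf_le ⟨_, hm, rfl⟩) ?_
    simp only [EReal.coe_lt_coe_iff, dotProduct_add, dotProduct_smul, smul_eq_mul]
    linarith
  rw [fE, this]
  simp

lemma piece_closed (d q : Fin m → ℝ) (A : Matrix (Fin s) (Fin m) ℝ)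
    (M : Finset (Fin s) → ((Fin s → ℝ) →ₗ[ℝ] (Fin m → ℝ)))
    (p : Finset (Fin s) × Finset (Fin s)) : IsClosed (piece d q A M p) := by
  have hMc : Continuous (fun w => A.mulVec (M p.1 w)) :=
    Continuous.matrix_mulVec continuous_const (M p.1).continuous_of_finiteDimensional
  have h1 : IsClosed {w | A.mulVec (M p.1 w) ≤ w} := isClosed_le hMc continuous_id
  have h2 : IsClosed {w : Fin s → ℝ | ∀ i ∈ p.2, (A.mulVec (M p.1 w)) i = w i} := by
    simp only [Set.ofPred_forall]
    refine isClosed_iInter fun i => isClosed_iInter fun _ => ?_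
    exact isClosed_eq ((continuous_apply i).comp hMc) (continuous_apply i)
  by_cases hg : GoodSet d q A p.2
  · simpa [piece, hg, Set.ofPred_and] using h1.inter h2
  · simp [piece, hg]

lemma piece_convex (d q : Fin m → ℝ) (A : Matrix (Fin s) (Fin m) ℝ)
    (M : Finset (Fin s) → ((Fin s → ℝ) →ₗ[ℝ] (Fin m → ℝ)))
    (p : Finset (Fin s) × Finset (Fin s)) : Convex ℝ (piece d q A M p) := by
  rintro w ⟨hg, hw1, hw2⟩ w' ⟨-, hw1', hw2'⟩ a b ha hb hab
  have hexp : ∀ i, (A.mulVec (M p.1 (a • w + b • w'))) i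
      = a * (A.mulVec (M p.1 w)) i + b * (A.mulVec (M p.1 w')) i := by
    intro i
    simp [mulVec_add, mulVec_smul]
  refine ⟨hg, fun i => ?_, fun i hi => ?_⟩
  · rw [hexp]
    simp only [Pi.add_apply, Pi.smul_apply, smul_eq_mul]
    have := mul_le_mul_of_nonneg_left (hw1 i) ha
    have := mul_le_mul_of_nonneg_left (hw1' i) hb
    linarith
  · rw [hexp, hw2 i hi, hw2' i hi]; simp

lemma piece_ne (d q : Fin m → ℝ) (hq : q ≠ 0) (A : Matrix (Fin s) (Fin m) ℝ)
    (M : Finset (Fin s) → ((Fin s → ℝ) →ₗ[ℝ] (Fin m → ℝ)))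
    (p : Finset (Fin s) × Finset (Fin s)) (hi : (interior (piece d q A M p)).Nonempty) :
    ∃ w, q ⬝ᵥ (M p.1 w) ≠ 0 := by
  by_contra hcon
  push Not at hcon
  obtain ⟨w0, hw0⟩ := hi
  apply hq
  rw [← dotProduct_eq_zero_iff]
  intro v
  have hg := (interior_subset hw0).1
  -- linear identity on the active rows
  have hid : ∀ w, ∀ i ∈ p.2, (A.mulVec (M p.1 w)) i = w i := by
    intro w i hip
    have hc : ContinuousAt (fun t : ℝ => w0 + t • w) 0 := by fun_prop
    have hev : ∀ᶠ t : ℝ in 𝓝 0, w0 + t • w ∈ piece d q A M p := by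
      apply hc
      simpa using mem_interior_iff_mem_nhds.1 hw0
    obtain ⟨t, ht, ht0⟩ := ((hev.filter_mono (nhdsWithin_le_nhds (s := Ioi 0))).and self_mem_nhdsWithin).exists
    have h1 := ht.2.2 i hip
    have h2 := (interior_subset hw0).2.2 i hip
    simp only [map_add, map_smul, mulVec_add, mulVec_smul, Pi.add_apply, Pi.smul_apply,
      smul_eq_mul, h2] at h1
    have h3 : t * (A.mulVec (M p.1 w)) i = t * w i := by linarith
    exact mul_left_cancel₀ (ne_of_gt ht0) h3
  have h0 : ∀ i ∈ p.2, (A.mulVec (M p.1 (A.mulVec v) - v)) i = 0 := by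
    intro i hip
    rw [mulVec_sub, Pi.sub_apply, hid _ i hip, sub_self]
  have := LexNN.antisymm (hg _ (fun i hip => (h0 i hip).le))
    (hg _ (fun i hip => by rw [mulVec_neg, Pi.neg_apply, h0 i hip, neg_zero]))
  rw [dotProduct_sub, hcon] at this
  linarith

end LP

section Generic

lemma pl_lipschitz {E ι : Type*} [NormedAddCommGroup E] [NormedSpace ℝ E] [Finite ι]
    (K : Set E) (hK : Convex ℝ K) (C : ι → Set E) (hC : ∀ i, IsClosed (C i))
    (l : ι → E →L[ℝ] ℝ) (g : E → ℝ) (hcov : ∀ w ∈ K, ∃ i, w ∈ C i)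
    (hg : ∀ i, ∀ w ∈ C i, g w = l i w) (L : ℝ) (hL : ∀ i, ‖l i‖ ≤ L) :
    ∀ w ∈ K, ∀ w' ∈ K, |g w' - g w| ≤ L * ‖w' - w‖ := by
  have hloc : ∀ w ∈ K, ∀ᶠ w' in 𝓝 w, w' ∈ K → |g w' - g w| ≤ L * ‖w' - w‖ := by
    intro w hw
    have h1 : ∀ᶠ w' in 𝓝 w, ∀ i, w' ∈ C i → w ∈ C i := by
      rw [eventually_all]
      intro i
      by_cases hi : w ∈ C i
      · exact Eventually.of_forall fun _ _ => hi
      · filter_upwards [(hC i).isOpen_compl.mem_nhds hi] with w' hw' h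
        exact absurd h hw'
    filter_upwards [h1] with w' h1 hw'
    obtain ⟨i, hi⟩ := hcov w' hw'
    rw [hg i w' hi, hg i w (h1 i hi), ← map_sub, ← Real.norm_eq_abs]
    exact ((l i).le_opNorm _).trans (mul_le_mul_of_nonneg_right (hL i) (norm_nonneg _))
  intro w hw w' hw'
  set γ : ℝ → E := fun t => w + t • (w' - w) with hγ
  have hγK : ∀ t ∈ Icc (0 : ℝ) 1, γ t ∈ K := fun t ht => hK.add_smul_sub_mem hw hw' ht
  have hγd : ∀ t t' : ℝ, t ≤ t' → ‖γ t' - γ t‖ = (t' - t) * ‖w' - w‖ := by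
    intro t t' h
    have : γ t' - γ t = (t' - t) • (w' - w) := by simp only [hγ]; module
    rw [this, norm_smul, Real.norm_of_nonneg (by linarith)]
  have hγc : Continuous γ := by fun_prop
  have hgc : ContinuousOn (fun t => g (γ t)) (Icc 0 1) := by
    intro t ht
    have h1 := (hγc.tendsto t).eventually (hloc _ (hγK t ht))
    rw [ContinuousWithinAt, tendsto_iff_norm_sub_tendsto_zero]
    have h2 : Tendsto (fun t' => L * ‖γ t' - γ t‖) (𝓝[Icc 0 1] t) (𝓝 0) := by
      have : Continuous (fun t' => L * ‖γ t' - γ t‖) := by fun_prop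
      have := this.tendsto t
      simp only [sub_self, norm_zero, mul_zero] at this
      exact this.mono_left nhdsWithin_le_nhds
    refine squeeze_zero' (Eventually.of_forall fun _ => norm_nonneg _) ?_ h2
    filter_upwards [nhdsWithin_le_nhds h1, self_mem_nhdsWithin] with t' h3 h4
    exact h3 (hγK t' h4)
  have key : Icc (0 : ℝ) 1 ⊆ {t | |g (γ t) - g w| ≤ L * (t * ‖w' - w‖)} := by
    apply IsClosed.Icc_subset_of_forall_exists_gt
    · have h1 : ContinuousOn (fun t => L * (t * ‖w' - w‖) - |g (γ t) - g w|) (Icc 0 1) := by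
        apply ContinuousOn.sub (by fun_prop)
        exact (hgc.sub continuousOn_const).abs
      have := h1.preimage_isClosed_of_isClosed isClosed_Icc (isClosed_Ici (a := 0))
      convert this using 1
      ext t
      simp [and_comm]
    · simp [hγ]
    · rintro t ⟨ht, ht01⟩ y hy
      have h1 := (hγc.tendsto t).eventually (hloc _ (hγK t ⟨ht01.1, ht01.2.le⟩))
      have h2 : ∀ᶠ t' in 𝓝[>] t, t' ∈ Ioc t (min y 1) :=
        Ioc_mem_nhdsGT (lt_min hy ht01.2)
      obtain ⟨t', h3, h4⟩ := ((h1.filter_mono nhdsWithin_le_nhds).and h2).exists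
      refine ⟨t', ?_, h4.1, h4.2.trans (min_le_left _ _)⟩
      have h5 := h3 (hγK t' ⟨ht01.1.trans h4.1.le, h4.2.trans (min_le_right _ _)⟩)
      rw [hγd _ _ h4.1.le] at h5
      simp only [Set.mem_ofPred_eq] at ht ⊢
      calc |g (γ t') - g w| ≤ |g (γ t') - g (γ t)| + |g (γ t) - g w| := abs_sub_le _ _ _
        _ ≤ L * ((t' - t) * ‖w' - w‖) + L * (t * ‖w' - w‖) := add_le_add h5 ht
        _ = _ := by ring
  have := key (right_mem_Icc.2 zero_le_one)
  simpa [hγ] using this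

lemma contDiffAt_integral {n : ℕ} {Z : Type*} [MeasurableSpace Z] (μ : Measure Z)
    [IsProbabilityMeasure μ] (U : Set (Fin n → ℝ)) (hU : IsOpen U)
    (h : (Fin n → ℝ) → Z → ℝ) (hint : ∀ x ∈ U, Integrable (h x) μ) (L : ℝ≥0)
    (hlip : ∀ᵐ z ∂μ, LipschitzOnWith L (fun x => h x z) U)
    (hdiff : ∀ x ∈ U, ∀ᵐ z ∂μ, ContDiffAt ℝ 1 (fun x => h x z) x) :
    ∀ x ∈ U, ContDiffAt ℝ 1 (fun x => ∫ z, h x z ∂μ) x := by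
  set D : (Fin n → ℝ) → Z → ((Fin n → ℝ) →L[ℝ] ℝ) := fun x z => fderiv ℝ (fun x => h x z) x
    with hD
  have hDd : ∀ x ∈ U, ∀ᵐ z ∂μ, HasFDerivAt (fun x => h x z) (D x z) x := by
    intro x hx
    filter_upwards [hdiff x hx] with z hz
    exact (hz.differentiableAt one_ne_zero).hasFDerivAt
  have hmeas : ∀ x ∈ U, AEStronglyMeasurable (D x) μ := by
    intro x hx
    have hcomp : ∀ v : Fin n → ℝ, AEStronglyMeasurable (fun z => D x z v) μ := by
      intro v
      set ε : ℕ → ℝ := fun k => 1 / ((k : ℝ) + 1) with hε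
      have hε0 : Tendsto ε atTop (𝓝 0) := tendsto_one_div_add_atTop_nhds_zero_nat
      have hεp : ∀ k, 0 < ε k := fun k => by positivity
      have hxe : Tendsto (fun k => x + ε k • v) atTop (𝓝 x) := by
        have := (hε0.smul_const v).const_add x
        simpa using this
      obtain ⟨k0, hk0⟩ := eventually_atTop.1 (hxe.eventually (hU.mem_nhds hx))
      refine aestronglyMeasurable_of_tendsto_ae atTop
        (f := fun k z => (ε (k + k0))⁻¹ • (h (x + ε (k + k0) • v) z - h x z)) ?_ ?_
      · intro k
        have h1 := ((hint _ (hk0 (k + k0) (by omega))).sub (hint x hx)).aestronglyMeasurable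
        exact h1.const_smul (ε (k + k0))⁻¹
      · filter_upwards [hDd x hx] with z hz
        have h1 := hz.hasLineDerivAt v
        have h2 := h1.tendsto_slope_zero_right
        have h3 : Tendsto (fun k => ε (k + k0)) atTop (𝓝[>] 0) := by
          rw [tendsto_nhdsWithin_iff]
          exact ⟨(tendsto_add_atTop_iff_nat k0).2 hε0, Eventually.of_forall fun k => hεp _⟩
        exact h2.comp h3
    have heq : D x = fun z => ∑ i : Fin n, (D x z (Pi.single i 1)) •
        (ContinuousLinearMap.proj i : (Fin n → ℝ) →L[ℝ] ℝ) := by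
      funext z
      ext v
      have hv : v = ∑ i, v i • (Pi.single i (1 : ℝ) : Fin n → ℝ) := by
        ext j
        simp [Finset.sum_apply, Pi.single_apply]
      conv_lhs => rw [hv, map_sum]
      simp [mul_comm]
    rw [heq]
    exact Finset.aestronglyMeasurable_fun_sum _ fun i _ =>
      (hcomp _).smul_const _
  have hder : ∀ x ∈ U, Integrable (D x) μ ∧
      HasFDerivAt (fun x => ∫ z, h x z ∂μ) (∫ z, D x z ∂μ) x := by
    intro x hx
    refine hasFDerivAt_integral_of_dominated_loc_of_lip (hU.mem_nhds hx)
      (bound := fun _ => (L : ℝ)) ?_ (hint x hx) (hmeas x hx) ?_ (integrable_const _) (hDd x hx)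
    · filter_upwards [hU.mem_nhds hx] with x' hx'
      exact (hint x' hx').aestronglyMeasurable
    · simpa using hlip
  intro x hx
  rw [contDiffAt_one_iff]
  refine ⟨fun x => ∫ z, D x z ∂μ, U, hU.mem_nhds hx, ?_, fun x hx => (hder x hx).2⟩
  intro x hx
  apply tendsto_integral_filter_of_dominated_convergence (fun _ => (L : ℝ))
  · filter_upwards [self_mem_nhdsWithin] with x' hx'
    exact hmeas x' hx'
  · filter_upwards [self_mem_nhdsWithin] with x' hx'
    filter_upwards [hlip] with z hz
    exact norm_fderiv_le_of_lipschitzOn ℝ (hU.mem_nhds hx') hz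
  · exact integrable_const _
  · filter_upwards [hdiff x hx] with z hz
    have := hz.fderiv_right (m := 0) (by norm_num)
    exact this.continuousAt.tendsto.mono_left nhdsWithin_le_nhds

lemma ae_support {s : ℕ} (μ : Measure (Fin s → ℝ)) : ∀ᵐ z ∂μ, z ∈ msupport μ := by
  have h : ∀ᵐ z ∂μ, z ∈ μ.support := Measure.support_mem_ae
  filter_upwards [h] with z hz U hU hzU
  rw [(nhds_basis_opens z).mem_measureSupport] at hz
  exact (hz U ⟨hzU, hU⟩).ne'

lemma level_null {s : ℕ} (l : (Fin s → ℝ) →L[ℝ] ℝ) (hl : l ≠ 0) (a : ℝ) :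
    ∀ᵐ w ∂(volume : Measure (Fin s → ℝ)), l w ≠ a := by
  have hne : ∃ v, l v ≠ 0 := by
    by_contra hc
    push Not at hc
    exact hl (ContinuousLinearMap.ext hc)
  obtain ⟨v, hv⟩ := hne
  set S : AffineSubspace ℝ (Fin s → ℝ) :=
    AffineSubspace.comap l.toLinearMap.toAffineMap (AffineSubspace.mk' a ⊥) with hS
  have hmem : ∀ w, w ∈ S ↔ l w = a := by
    intro w
    simp [hS, AffineSubspace.mem_comap, AffineSubspace.mem_mk', sub_eq_zero]
  have hStop : S ≠ ⊤ := by
    intro htop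
    have h1 : l 0 = a := (hmem 0).1 (by rw [htop]; trivial)
    have h2 : l v = a := (hmem v).1 (by rw [htop]; trivial)
    rw [map_zero] at h1
    exact hv (h2.trans h1.symm)
  have := Measure.addHaar_affineSubspace (volume : Measure (Fin s → ℝ)) S hStop
  rw [ae_iff]
  convert this using 2
  ext w
  simp [hmem w]

end Generic

theorem meanUpperSemideviation_contDiff {n m s : ℕ}
    (c : Fin n → ℝ) (q d : Fin m → ℝ)
    (A : Matrix (Fin s) (Fin m) ℝ) (T : Matrix (Fin s) (Fin n) ℝ)
    (μZ : Measure (Fin s → ℝ)) [IsProbabilityMeasure μZ]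
    (hdom : (domf c q d A T).Nonempty)
    (hmom : ∫⁻ z, ‖z‖₊ ∂μZ < ⊤)
    (habs : μZ ≪ (volume : Measure (Fin s → ℝ)))
    (ρ : ℝ) (hρ : ρ ∈ Set.Ico (0 : ℝ) 1)
    (QE QSD : (Fin n → ℝ) → ℝ)
    (hQE : ∀ x, QE x = ∫ z, (fE c q d A T x z).toReal ∂μZ)
    (hQSD : ∀ x, QSD x = QE x + ρ * ∫ z, max ((fE c q d A T x z).toReal - QE x) 0 ∂μZ) :
    ∀ x₀ ∈ interior (PZSet A T μZ), QE x₀ ≠ 0 → ContDiffAt ℝ 1 QSD x₀ := by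
  classical
  intro x₀ hx₀ _
  choose M hM using exists_pinv A
  have hR := recession c d q A T hdom
  set K : Set (Fin s → ℝ) := {w | ∃ y, A.mulVec y ≤ w} with hK
  have hKc : Convex ℝ K := by
    rintro w ⟨y, hy⟩ w' ⟨y', hy'⟩ a b ha hb hab
    refine ⟨a • y + b • y', ?_⟩
    rw [mulVec_add, mulVec_smul, mulVec_smul]
    exact add_le_add (smul_le_smul_of_nonneg_left hy ha) (smul_le_smul_of_nonneg_left hy' hb)
  have hcov : ∀ w ∈ K, ∃ p, w ∈ piece d q A M p := fun w hw => cover d q A M hM hR w hw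
  have hpK : ∀ p, ∀ w ∈ piece d q A M p, w ∈ K := fun p w hw => ⟨_, hw.2.1⟩
  let ql : (Fin m → ℝ) →ₗ[ℝ] ℝ := dotProductBilin ℝ ℝ q
  let l : Finset (Fin s) × Finset (Fin s) → ((Fin s → ℝ) →L[ℝ] ℝ) :=
    fun p => LinearMap.toContinuousLinearMap (ql ∘ₗ M p.1)
  have hl : ∀ p w, l p w = q ⬝ᵥ (M p.1 w) := fun p w => rfl
  let cl : (Fin n → ℝ) →L[ℝ] ℝ := LinearMap.toContinuousLinearMap (dotProductBilin ℝ ℝ c)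
  have hcl : ∀ x, cl x = c ⬝ᵥ x := fun x => rfl
  let Tl : (Fin n → ℝ) →L[ℝ] (Fin s → ℝ) := LinearMap.toContinuousLinearMap T.mulVecLin
  have hTl : ∀ x, Tl x = T.mulVec x := fun x => rfl
  let g : (Fin s → ℝ) → ℝ := fun w => (fE 0 q d A T 0 w).toReal
  have hg : ∀ p, ∀ w ∈ piece d q A M p, g w = l p w := by
    intro p w hw
    have := piece_value 0 d q A T M p 0 w (by simpa using hw)
    simpa [hl, g] using this
  -- Lipschitz extension
  let Lg : ℝ≥0 := ∑ p, ‖l p‖₊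
  have hLg : ∀ p, ‖l p‖ ≤ (Lg : ℝ) := by
    intro p
    have : ‖l p‖₊ ≤ Lg := Finset.single_le_sum (f := fun p => ‖l p‖₊) (fun _ _ => zero_le)
      (Finset.mem_univ p)
    exact_mod_cast this
  have hgl : LipschitzOnWith Lg g K := by
    apply LipschitzOnWith.of_dist_le_mul
    intro w hw w' hw'
    rw [dist_eq_norm, dist_eq_norm, Real.norm_eq_abs]
    exact pl_lipschitz K hKc _ (piece_closed d q A M) l g hcov hg Lg hLg w' hw' w hw
  obtain ⟨G, hGL, hGeq⟩ := hgl.extend_real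
  have hG : ∀ p, ∀ w ∈ piece d q A M p, G w = l p w := fun p w hw => by
    rw [← hg p w hw, hGeq (hpK p w hw)]
  set U := interior (PZSet A T μZ) with hUdef
  have hU : IsOpen U := isOpen_interior
  have hUK : ∀ x ∈ U, ∀ z ∈ msupport μZ, Tl x + z ∈ K := fun x hx z hz =>
    interior_subset hx z hz
  let h : (Fin n → ℝ) → (Fin s → ℝ) → ℝ := fun x z => cl x + G (Tl x + z)
  have hF : ∀ x ∈ U, ∀ z ∈ msupport μZ, (fE c q d A T x z).toReal = h x z := by
    intro x hx z hz
    obtain ⟨p, hp⟩ := hcov _ (hUK x hx z hz)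
    rw [piece_value c d q A T M p x z hp]
    simp only [h]
    rw [hG p _ hp]
    rfl
  have hsupp := ae_support μZ
  -- generic position
  have hgen : ∀ (N : Set (Fin s → ℝ)) (x : Fin n → ℝ), volume N = 0 →
      ∀ᵐ z ∂μZ, Tl x + z ∉ N := by
    intro N x hN
    refine habs.ae_le (?_ : ∀ᵐ z ∂(volume : Measure (Fin s → ℝ)), Tl x + z ∉ N)
    rw [ae_iff]
    simp only [not_not]
    have := measure_preimage_add (volume : Measure (Fin s → ℝ)) (Tl x) N
    rw [hN] at this
    exact this
  have hint0 : ∀ x ∈ U, ∀ᵐ z ∂μZ, ∃ p, Tl x + z ∈ interior (piece d q A M p) := by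
    intro x hx
    have h1 : ∀ᵐ z ∂μZ, ∀ p, Tl x + z ∉ frontier (piece d q A M p) := by
      rw [ae_all_iff]
      intro p
      exact hgen _ x ((piece_convex d q A M p).addHaar_frontier volume)
    filter_upwards [h1, hsupp] with z hz hzs
    obtain ⟨p, hp⟩ := hcov _ (hUK x hx z hzs)
    refine ⟨p, ?_⟩
    by_contra hni
    exact hz p ⟨subset_closure hp, hni⟩
  -- Lipschitz in x
  let LF : ℝ≥0 := ‖cl‖₊ + Lg * (‖Tl‖₊ + 0)
  have hlip : ∀ z, LipschitzWith LF (fun x => h x z) := by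
    intro z
    exact cl.lipschitz.add (hGL.comp (Tl.lipschitz.add (LipschitzWith.const z)))
  have hnorm : Integrable (fun z : Fin s → ℝ => ‖z‖) μZ := by
    refine ⟨by fun_prop, ?_⟩
    simpa [HasFiniteIntegral, enorm_eq_nnnorm] using hmom
  have hint : ∀ x, Integrable (h x) μZ := by
    intro x
    apply (integrable_const (cl x)).add
    have hb : Integrable (fun z : Fin s → ℝ => ‖G (Tl x)‖ + (Lg : ℝ) * ‖z‖) μZ :=
      (integrable_const _).add (hnorm.const_mul _)
    refine hb.mono' ?_ ?_
    · exact (hGL.continuous.comp (by fun_prop)).aestronglyMeasurable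
    · refine Eventually.of_forall fun z => ?_
      have h1 := hGL.dist_le_mul (Tl x + z) (Tl x)
      rw [dist_eq_norm, dist_eq_norm, add_sub_cancel_left] at h1
      have h2 := norm_add_le (G (Tl x)) (G (Tl x + z) - G (Tl x))
      rw [add_sub_cancel] at h2
      linarith
  have hdiff : ∀ x ∈ U, ∀ᵐ z ∂μZ, ContDiffAt ℝ 1 (fun x => h x z) x := by
    intro x hx
    filter_upwards [hint0 x hx] with z hz
    obtain ⟨p, hp⟩ := hz
    have hc : ContinuousAt (fun x => Tl x + z) x := by fun_prop
    have hev : (fun x => h x z) =ᶠ[𝓝 x] fun x => cl x + l p (Tl x + z) := by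
      filter_upwards [hc (mem_interior_iff_mem_nhds.1 hp)] with x' hx'
      simp only [h]
      rw [hG p _ hx']
    refine ContDiffAt.congr_of_eventuallyEq ?_ hev
    fun_prop
  let Q : (Fin n → ℝ) → ℝ := fun x => ∫ z, h x z ∂μZ
  have hQC : ∀ x ∈ U, ContDiffAt ℝ 1 Q x :=
    contDiffAt_integral μZ U hU h (fun x _ => hint x) LF
      (Eventually.of_forall fun z => (hlip z).lipschitzOnWith) hdiff
  have hQL : LipschitzWith LF Q := by
    apply LipschitzWith.of_dist_le_mul
    intro x x'
    rw [dist_eq_norm]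
    simp only [Q]
    rw [← integral_sub (hint x) (hint x')]
    have := norm_integral_le_of_norm_le_const (μ := μZ) (f := fun z => h x z - h x' z)
      (C := LF * dist x x') (Eventually.of_forall fun z => by
        have := (hlip z).dist_le_mul x x'
        rwa [dist_eq_norm] at this)
    simpa using this
  have hQQE : ∀ x ∈ U, QE x = Q x := by
    intro x hx
    rw [hQE]
    apply integral_congr_ae
    filter_upwards [hsupp] with z hz using hF x hx z hz
  let h2 : (Fin n → ℝ) → (Fin s → ℝ) → ℝ := fun x z => max (h x z - Q x) 0
  have hS : ∀ x ∈ U, QSD x = Q x + ρ * ∫ z, h2 x z ∂μZ := by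
    intro x hx
    rw [hQSD, hQQE x hx]
    congr 2
    apply integral_congr_ae
    filter_upwards [hsupp] with z hz
    simp only [h2]
    rw [hF x hx z hz]
  have hdiff2 : ∀ x ∈ U, ∀ᵐ z ∂μZ, ContDiffAt ℝ 1 (fun x => h2 x z) x := by
    intro x hx
    by_cases hq : q = 0
    · have hz0 : ∀ x ∈ U, ∀ z ∈ msupport μZ, h x z = cl x := by
        intro x hx z hz
        obtain ⟨p, hp⟩ := hcov _ (hUK x hx z hz)
        simp only [h]
        rw [hG p _ hp, hl, hq, zero_dotProduct, add_zero]
      have hQ0 : ∀ x ∈ U, Q x = cl x := by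
        intro x hx
        have : Q x = ∫ _z, cl x ∂μZ := by
          apply integral_congr_ae
          filter_upwards [hsupp] with z hz using hz0 x hx z hz
        rw [this]; simp
      filter_upwards [hsupp] with z hz
      have hev : (fun x => h2 x z) =ᶠ[𝓝 x] fun _ => 0 := by
        filter_upwards [hU.mem_nhds hx] with x' hx'
        simp only [h2]
        rw [hz0 x' hx' z hz, hQ0 x' hx', sub_self, max_self]
      exact contDiffAt_const.congr_of_eventuallyEq hev
    · have hne : ∀ᵐ z ∂μZ, ∀ p, l p ≠ 0 → l p (Tl x + z) ≠ Q x - cl x := by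
        rw [ae_all_iff]
        intro p
        by_cases hp : l p = 0
        · simp [hp]
        · have h1 := level_null (l p) hp (Q x - cl x)
          rw [ae_iff] at h1
          filter_upwards [hgen _ x h1] with z hz _
          simpa using hz
      filter_upwards [hint0 x hx, hne, hdiff x hx] with z ⟨p, hp⟩ hz hd
      have hlp : l p ≠ 0 := by
        obtain ⟨w, hw⟩ := piece_ne d q hq A M p ⟨_, hp⟩
        intro h0
        apply hw
        rw [← hl, h0]; rfl
      have hxz : h x z - Q x ≠ 0 := by
        have := hz p hlp
        simp only [h]
        rw [hG p _ (interior_subset hp)]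
        intro h0
        apply this
        linarith
      have hd' : ContDiffAt ℝ 1 (fun x => h x z - Q x) x := hd.sub (hQC x hx)
      rcases lt_or_gt_of_ne hxz with hlt | hgt
      · have hev : (fun x => h2 x z) =ᶠ[𝓝 x] fun _ => 0 := by
          filter_upwards [hd'.continuousAt.eventually_lt continuousAt_const hlt] with x' hx'
          exact max_eq_right hx'.le
        exact contDiffAt_const.congr_of_eventuallyEq hev
      · have hev : (fun x => h2 x z) =ᶠ[𝓝 x] fun x => h x z - Q x := by
          filter_upwards [continuousAt_const.eventually_lt hd'.continuousAt hgt] with x' hx'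
          exact max_eq_left hx'.le
        exact hd'.congr_of_eventuallyEq hev
  have hC2 := contDiffAt_integral μZ U hU h2
    (fun x _ => ((hint x).sub (integrable_const (Q x))).pos_part) (LF + LF)
    (Eventually.of_forall fun z => (((hlip z).sub hQL).max_const 0).lipschitzOnWith) hdiff2
  have hev : QSD =ᶠ[𝓝 x₀] fun x => Q x + ρ * ∫ z, h2 x z ∂μZ := by
    filter_upwards [hU.mem_nhds hx₀] with x hx using hS x hx
  exact ((hQC x₀ hx₀).add (contDiffAt_const.mul (hC2 x₀ hx₀))).congr_of_eventuallyEq hev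
end
end
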